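/- Let T be a tree with odd diameter. Then the spectrum of the eccentricity matrix 𝓔(T) is symmetric about the origin: if λ is an eigenvalue of 𝓔(T) with multiplicity k, then −λ is also an eigenvalue of 𝓔(T) with multiplicity k. -/

import Mathlib

open SimpleGraph Finset Matrix Polynomial

/-- The eccentricity of a vertex: the greatest distance from `u` to any vertex. -/
noncomputable def ecc {V : Type*} [Fintype V] (G : SimpleGraph V) (u : V) : ℕ :=
  Finset.univ.sup fun v => G.dist u v

/-- The diameter of a graph: the greatest distance between any pair of vertices. -/
noncomputable def gdiam {V : Type*} [Fintype V] (G : SimpleGraph V) : ℕ :=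
  Finset.univ.sup fun p : V × V => G.dist p.1 p.2

/-- The eccentricity matrix: `(u,v)` entry is `d(u,v)` if `d(u,v) = min (e u) (e v)`,
and `0` otherwise. -/
noncomputable def eccMatrix {V : Type*} [Fintype V] (G : SimpleGraph V) : Matrix V V ℝ :=
  Matrix.of fun u v =>
    if G.dist u v = min (ecc G u) (ecc G v) then (G.dist u v : ℝ) else 0

/-!
A tree of odd diameter has an edge `c c'` whose ends have the same eccentricity `r`, the middle edge
of a longest path. Deleting it splits the vertices into those closer to `c` and those closer to
`c'`. A vertex `b` farthest from `c` lies on the side of `c'`, and every vertex `v` on the side of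
`c` satisfies `d(v, c) < d(v, c') ≤ r`. So for `u` and `v` both on that side
`d(u, v) ≤ d(u, c) + d(c, v) < d(u, c) + r = d(u, b) ≤ e(u)`, and likewise `d(u, v) < e(v)`: the
eccentricity matrix vanishes on pairs on the same side. Changing the sign of the basis vectors on
one side therefore conjugates the matrix to its negative.
-/

section Matrix

variable {n R : Type*} [Fintype n] [DecidableEq n] [CommRing R]

theorem charpoly_neg_eq_neg_one_pow_mul_comp (M : Matrix n n R) :
    (-M).charpoly = (-1) ^ Fintype.card n * M.charpoly.comp (-X) := by
  have hmatrix : charmatrix (-M) = -(compRingHom (-X)).mapMatrix (charmatrix M) := by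
    ext1 i j
    by_cases hij : i = j <;> simp [hij, add_comm]
  rw [charpoly, hmatrix, det_neg, ← RingHom.map_det, coe_compRingHom_apply, charpoly]

theorem rootMultiplicity_charpoly_neg [IsDomain R] (M : Matrix n n R) (x : R) :
    (-M).charpoly.rootMultiplicity x = M.charpoly.rootMultiplicity (-x) := by
  have hcomp : (M.charpoly.comp (-X)).rootMultiplicity x = M.charpoly.rootMultiplicity (-x) := by
    simpa using rootMultiplicity_comp_C_mul_X_add_C M.charpoly (-1) 0 x isUnit_one.neg
  have hne : C ((-1) ^ Fintype.card n) * M.charpoly.comp (-X) ≠ 0 := by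
    simpa [comp_neg_X_eq_zero_iff] using M.charpoly_monic.ne_zero
  rw [← hcomp, charpoly_neg_eq_neg_one_pow_mul_comp, ← C_1, ← C_neg, ← C_pow,
    rootMultiplicity_mul hne, rootMultiplicity_C, zero_add]

theorem charpoly_neg_eq_of_bipartition {M : Matrix n n R} (p : n → Prop)
    (hM : ∀ i j, (p i ↔ p j) → M i j = 0) : (-M).charpoly = M.charpoly := by
  classical
  let D : Matrix n n R := diagonal fun i ↦ if p i then 1 else -1
  have hD : D * D = 1 := by
    rw [diagonal_mul_diagonal, ← diagonal_one]
    congr with i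
    split_ifs <;> ring
  have hconj : D * M * D = -M := by
    ext i j
    rw [mul_diagonal, diagonal_mul, Matrix.neg_apply]
    by_cases hi : p i <;> by_cases hj : p j <;> simp [hi, hj, hM]
  calc (-M).charpoly = (D * M * D).charpoly := by rw [hconj]
    _ = (D * (D * M)).charpoly := charpoly_mul_comm _ _
    _ = M.charpoly := by rw [← mul_assoc, hD, one_mul]

end Matrix

section Distance

variable {V : Type*} {G : SimpleGraph V} {m u v x y : V}

theorem dist_eq_dist_add_dist_of_mem_support {p : G.Walk u v} (hp : p.length = G.dist u v)
    (hm : m ∈ p.support) : G.dist u v = G.dist u m + G.dist m v := by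
  classical
  rw [← length_eq_dist_of_subwalk hp (p.isSubwalk_takeUntil hm),
    ← length_eq_dist_of_subwalk hp (p.isSubwalk_dropUntil hm), ← hp,
    ← Walk.length_append, p.take_spec]

theorem exists_adj_dist_eq_of_dist_eq_add_one_add {i j : ℕ}
    (h : G.dist u v = i + 1 + j) : ∃ x y, G.Adj x y ∧ G.dist u x = i ∧ G.dist y v = j := by
  obtain ⟨p, hp⟩ := exists_walk_of_dist_ne_zero (u := u) (v := v) (G := G) (by lia)
  refine ⟨p.getVert i, p.getVert (i + 1), p.adj_getVert_succ (by lia), ?_, ?_⟩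
  · rw [← length_eq_dist_of_subwalk hp (p.isSubwalk_take i), p.take_length]
    lia
  · rw [← length_eq_dist_of_subwalk hp (p.isSubwalk_drop (i + 1)), p.drop_length]
    lia

theorem mem_support_of_dist_eq_dist_add_dist (hG : G.IsTree)
    (h : G.dist u v = G.dist u m + G.dist m v) (p : G.Walk u v) : m ∈ p.support := by
  classical
  obtain ⟨q, hq⟩ := hG.connected.exists_walk_length_eq_dist u m
  obtain ⟨r, hr⟩ := hG.connected.exists_walk_length_eq_dist m v
  have hpath : (q.append r).IsPath :=
    (q.append r).isPath_of_length_eq_dist (by rw [Walk.length_append, hq, hr, h])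
  have heq : p.bypass = q.append r :=
    (hG.existsUnique_path u v).unique p.bypass_isPath hpath
  refine p.support_bypass_subset_support ?_
  rw [heq, Walk.mem_support_append_iff]
  exact .inl q.end_mem_support

-- A walk from `u` to `v` that makes a detour through `w` still has to pass `m`.
theorem dist_eq_dist_add_dist_or_of_isTree (hG : G.IsTree)
    (h : G.dist u v = G.dist u m + G.dist m v) (w : V) :
    G.dist u w = G.dist u m + G.dist m w ∨ G.dist w v = G.dist w m + G.dist m v := by
  obtain ⟨p, hp⟩ := hG.connected.exists_walk_length_eq_dist u w
  obtain ⟨q, hq⟩ := hG.connected.exists_walk_length_eq_dist w v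
  have hm := mem_support_of_dist_eq_dist_add_dist hG h (p.append q)
  exact ((Walk.mem_support_append_iff _ _).mp hm).imp
    (dist_eq_dist_add_dist_of_mem_support hp) (dist_eq_dist_add_dist_of_mem_support hq)

theorem dist_eq_dist_add_one_of_adj_of_lt (hxy : G.Adj x y)
    (hu : G.dist u x < G.dist u y) : G.dist u y = G.dist u x + 1 := by
  have := hxy.diff_dist_adj (u := u)
  lia

theorem dist_eq_dist_add_one_add_dist_of_adj_of_lt (hG : G.IsTree) (hxy : G.Adj x y)
    (hu : G.dist u x < G.dist u y) (hv : G.dist v y < G.dist v x) :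
    G.dist u v = G.dist u x + 1 + G.dist v y := by
  have huy := dist_eq_dist_add_one_of_adj_of_lt hxy hu
  have hvx := dist_eq_dist_add_one_of_adj_of_lt hxy.symm hv
  have hxy_dist : G.dist x y = 1 := dist_eq_one_iff_adj.mpr hxy
  rcases dist_eq_dist_add_dist_or_of_isTree hG (huy.trans (by rw [hxy_dist])) v with h | h
  · rw [h, dist_comm (u := x), hvx]
    ring
  · lia

end Distance

section Eccentricity

variable {V : Type*} [Fintype V] {G : SimpleGraph V} {a b u v x y : V} {k : ℕ}

theorem dist_le_ecc (G : SimpleGraph V) (u v : V) : G.dist u v ≤ ecc G u :=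
  le_sup (f := G.dist u) (mem_univ v)

theorem exists_dist_eq_ecc (G : SimpleGraph V) (u : V) : ∃ v, G.dist u v = ecc G u := by
  obtain ⟨v, -, hv⟩ := exists_mem_eq_sup univ ⟨u, mem_univ u⟩ (G.dist u)
  exact ⟨v, hv.symm⟩

theorem dist_le_gdiam (G : SimpleGraph V) (u v : V) : G.dist u v ≤ gdiam G :=
  le_sup (f := fun p : V × V ↦ G.dist p.1 p.2) (mem_univ (u, v))

theorem exists_dist_eq_gdiam [Nonempty V] (G : SimpleGraph V) : ∃ u v, G.dist u v = gdiam G := by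
  obtain ⟨⟨u, v⟩, -, huv⟩ :=
    exists_mem_eq_sup univ univ_nonempty fun p : V × V ↦ G.dist p.1 p.2
  exact ⟨u, v, huv.symm⟩

theorem eccMatrix_apply_eq_zero (hu : G.dist u v < ecc G u) (hv : G.dist u v < ecc G v) :
    eccMatrix G u v = 0 :=
  if_neg (lt_min hu hv).ne

theorem ecc_eq_of_adj_of_gdiam_eq (hG : G.IsTree) (hxy : G.Adj x y)
    (hdiam : gdiam G = 2 * k + 1) (hax : G.dist a x = k) (hay : G.dist a y = k + 1)
    (hby : G.dist b y = k) (hbx : G.dist b x = k + 1) : ecc G x = k + 1 := by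
  refine le_antisymm (Finset.sup_le fun u _ ↦ ?_) ?_
  · rw [dist_comm]
    rcases (hG.dist_ne_of_adj u hxy).lt_or_gt with hu | hu
    · have hub := dist_eq_dist_add_one_add_dist_of_adj_of_lt hG hxy hu (v := b) (by lia)
      have := dist_le_gdiam G u b
      lia
    · have hua := dist_eq_dist_add_one_add_dist_of_adj_of_lt hG hxy.symm hu (v := a) (by lia)
      have hux := dist_eq_dist_add_one_of_adj_of_lt hxy.symm hu
      have := dist_le_gdiam G u a
      lia
  · rw [← hbx, dist_comm]
    exact dist_le_ecc G x b

theorem exists_adj_ecc_eq_of_odd_gdiam (hG : G.IsTree) (hodd : Odd (gdiam G)) :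
    ∃ x y, G.Adj x y ∧ ecc G x = ecc G y := by
  have := hG.connected.nonempty
  obtain ⟨k, hk⟩ := hodd
  obtain ⟨a, b, hab⟩ := exists_dist_eq_gdiam G
  obtain ⟨x, y, hxy, hax, hyb⟩ :=
    exists_adj_dist_eq_of_dist_eq_add_one_add (G := G) (u := a) (v := b) (i := k) (j := k)
      (by lia)
  have hby : G.dist b y = k := by rw [dist_comm, hyb]
  have hay : G.dist a y = k + 1 := by
    have := hG.connected.dist_triangle (u := a) (v := y) (w := b)
    have := hG.dist_eq_dist_add_one_of_adj a hxy
    lia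
  have hbx : G.dist b x = k + 1 := by
    have := hG.connected.dist_triangle (u := a) (v := x) (w := b)
    have := hG.dist_eq_dist_add_one_of_adj b hxy
    have := G.dist_comm (u := x) (v := b)
    lia
  refine ⟨x, y, hxy, ?_⟩
  rw [ecc_eq_of_adj_of_gdiam_eq hG hxy hk hax hay hby hbx,
    ecc_eq_of_adj_of_gdiam_eq hG hxy.symm hk hby hbx hax hay]

theorem dist_lt_ecc_of_adj_of_ecc_eq (hG : G.IsTree) (hxy : G.Adj x y)
    (hecc : ecc G x = ecc G y) (hu : G.dist u x < G.dist u y) (hv : G.dist v x < G.dist v y) :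
    G.dist u v < ecc G u := by
  obtain ⟨b, hb⟩ := exists_dist_eq_ecc G x
  rw [dist_comm] at hb
  have hby : G.dist b y < G.dist b x := by
    have := dist_le_ecc G y b
    rw [dist_comm] at this
    exact lt_of_le_of_ne (by lia) (hG.dist_ne_of_adj b hxy).symm
  have hbx := dist_eq_dist_add_one_of_adj_of_lt hxy.symm hby
  have hvy : G.dist v y ≤ G.dist b x := by
    rw [hb, hecc, dist_comm]
    exact dist_le_ecc G y v
  calc G.dist u v ≤ G.dist u x + G.dist v x := by
        rw [dist_comm (u := v)]
        exact hG.connected.dist_triangle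
    _ < G.dist u x + G.dist b x := by lia
    _ = G.dist u b := by
        rw [dist_eq_dist_add_one_add_dist_of_adj_of_lt hG hxy hu hby, hbx]
        ring
    _ ≤ ecc G u := dist_le_ecc G u b

theorem eccMatrix_apply_eq_zero_of_adj_of_ecc_eq (hG : G.IsTree) (hxy : G.Adj x y)
    (hecc : ecc G x = ecc G y) (huv : G.dist u x < G.dist u y ↔ G.dist v x < G.dist v y) :
    eccMatrix G u v = 0 := by
  wlog hu : G.dist u x < G.dist u y generalizing x y
  · have hu' := hG.dist_ne_of_adj u hxy
    have hv' := hG.dist_ne_of_adj v hxy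
    exact this hxy.symm hecc.symm (by lia) (by lia)
  have hv := huv.mp hu
  refine eccMatrix_apply_eq_zero (dist_lt_ecc_of_adj_of_ecc_eq hG hxy hecc hu hv) ?_
  rw [dist_comm]
  exact dist_lt_ecc_of_adj_of_ecc_eq hG hxy hecc hv hu

end Eccentricity

/-- The spectrum of the eccentricity matrix of a tree with odd diameter is symmetric about
the origin: every `λ` and `-λ` occur as eigenvalues with the same multiplicity. -/
theorem stmt5 {V : Type*} [Fintype V] [DecidableEq V] (T : SimpleGraph V)
    (hT : T.IsTree) (hodd : Odd (gdiam T)) :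
    ∀ x : ℝ, (eccMatrix T).charpoly.rootMultiplicity x
      = (eccMatrix T).charpoly.rootMultiplicity (-x) := by
  intro x
  obtain ⟨c, c', hadj, hecc⟩ := exists_adj_ecc_eq_of_odd_gdiam hT hodd
  have hneg : (-eccMatrix T).charpoly = (eccMatrix T).charpoly :=
    charpoly_neg_eq_of_bipartition (fun u ↦ T.dist u c < T.dist u c') fun _ _ ↦
      eccMatrix_apply_eq_zero_of_adj_of_ecc_eq hT hadj hecc
  rw [← rootMultiplicity_charpoly_neg, hneg]
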